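/- Let V be a set and ℌ a halfspace system on V. Let 𝒟 ⊆ ℌ be a finite collection of pairwise transverse elements that is maximal, in the sense that no m ∈ ℌ is transverse to every element of 𝒟. Let (h_n)_{n∈ℕ} be a strictly descending chain in ℌ. Then there exist k ∈ 𝒟 and n ∈ ℕ such that h_n ⊆ k or h_n ⊆ V \ k. -/

import Mathlib

/-- Two subsets `h, k` of `V` are transverse if the four "corners" are all nonempty. -/
def Transverse {V : Type*} (h k : Set V) : Prop :=
  (h ∩ k).Nonempty ∧ (h ∩ kᶜ).Nonempty ∧ (hᶜ ∩ k).Nonempty ∧ (hᶜ ∩ kᶜ).Nonempty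

/-- A halfspace system on `V`: a family of subsets closed under complementation and
interval-finite. -/
structure HalfspaceSystem (V : Type*) where
  carrier : Set (Set V)
  compl_mem : ∀ h ∈ carrier, hᶜ ∈ carrier
  intervalFinite : ∀ h ∈ carrier, ∀ k ∈ carrier, h ⊆ k →
    {m ∈ carrier | h ⊆ m ∧ m ⊆ k}.Finite

/-- Two halfspaces are strongly separated if no member of the system is transverse to both. -/
def StronglySeparated {V : Type*} (ℌ : HalfspaceSystem V) (h k : Set V) : Prop :=
  ∀ m ∈ ℌ.carrier, ¬(Transverse m h ∧ Transverse m k)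

/-!
The terms of the chain form an infinite family of halfspaces with a common upper bound `b = h 0`.
For any halfspace `c`, the members of the family that contain `c` lie in the finite interval from
`c` to `b`. Take `c = k` and `c = kᶜ`: if no member is contained in `k` or in `kᶜ`, then all but
finitely many members are transverse to `k`. If this happened for every `k` in the finite family
`𝒟`, some member would be transverse to all of `𝒟`, against maximality.
-/

theorem transverse_iff_not_subset {V : Type*} {h k : Set V} :
    Transverse h k ↔ ¬h ⊆ k ∧ ¬h ⊆ kᶜ ∧ ¬k ⊆ h ∧ ¬kᶜ ⊆ h := by
  simp only [Transverse, ← Set.inter_compl_nonempty_iff, compl_compl, Set.inter_comm hᶜ]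
  tauto

namespace HalfspaceSystem

variable {V : Type*} (ℌ : HalfspaceSystem V) {S : Set (Set V)} {b : Set V}

theorem finite_setOf_superset (hS : S ⊆ ℌ.carrier) (hb : b ∈ ℌ.carrier) (hSb : ∀ s ∈ S, s ⊆ b)
    {c : Set V} (hc : c ∈ ℌ.carrier) : {s ∈ S | c ⊆ s}.Finite := by
  by_cases hcb : c ⊆ b
  · exact (ℌ.intervalFinite c hc b hb hcb).subset fun s ⟨hs, hcs⟩ => ⟨hS hs, hcs, hSb s hs⟩
  · exact Set.finite_empty.subset fun s ⟨hs, hcs⟩ => hcb (hcs.trans (hSb s hs))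

theorem finite_setOf_not_transverse (hS : S ⊆ ℌ.carrier) (hb : b ∈ ℌ.carrier)
    (hSb : ∀ s ∈ S, s ⊆ b) {k : Set V} (hk : k ∈ ℌ.carrier)
    (hSk : ∀ s ∈ S, ¬s ⊆ k ∧ ¬s ⊆ kᶜ) : {s ∈ S | ¬Transverse s k}.Finite := by
  have hfin : ({s ∈ S | k ⊆ s} ∪ {s ∈ S | kᶜ ⊆ s}).Finite :=
    (ℌ.finite_setOf_superset hS hb hSb hk).union
      (ℌ.finite_setOf_superset hS hb hSb (ℌ.compl_mem k hk))
  refine hfin.subset fun s ⟨hs, hsk⟩ => ?_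
  by_contra hnot
  obtain ⟨hks, hkcs⟩ := not_or.1 hnot
  exact hsk (transverse_iff_not_subset.2
    ⟨(hSk s hs).1, (hSk s hs).2, fun hsub => hks ⟨hs, hsub⟩, fun hsub => hkcs ⟨hs, hsub⟩⟩)

end HalfspaceSystem

theorem chain_enters_maximal_transverse_family_general {V : Type*} (ℌ : HalfspaceSystem V)
    {𝒟 : Finset (Set V)} (h𝒟mem : ∀ k ∈ 𝒟, k ∈ ℌ.carrier)
    (h𝒟max : ¬∃ m ∈ ℌ.carrier, ∀ k ∈ 𝒟, Transverse m k)
    {S : Set (Set V)} (hSinf : S.Infinite) (hS : S ⊆ ℌ.carrier)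
    {b : Set V} (hb : b ∈ ℌ.carrier) (hSb : ∀ s ∈ S, s ⊆ b) :
    ∃ k ∈ 𝒟, ∃ s ∈ S, s ⊆ k ∨ s ⊆ kᶜ := by
  by_contra! hSk
  have hfin : (⋃ k ∈ 𝒟, {s ∈ S | ¬Transverse s k}).Finite :=
    𝒟.finite_toSet.biUnion fun k hk =>
      ℌ.finite_setOf_not_transverse hS hb hSb (h𝒟mem k hk) (hSk k hk)
  obtain ⟨s, hs, hs_notMem⟩ := hSinf.exists_notMem_finite hfin
  refine h𝒟max ⟨s, hS hs, fun k hk => ?_⟩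
  by_contra hsk
  exact hs_notMem (Set.mem_biUnion hk ⟨hs, hsk⟩)

/-- if `𝒟` is a finite maximal family of pairwise transverse halfspaces and
`(hₙ)` is a strictly descending chain in the system, then some term of the chain is
contained in a member of `𝒟` or in its complement. -/
theorem chain_enters_maximal_transverse_family
    {V : Type*} (ℌ : HalfspaceSystem V)
    (𝒟 : Finset (Set V)) (h𝒟mem : ∀ k ∈ 𝒟, k ∈ ℌ.carrier)
    (h𝒟trans : ∀ k ∈ 𝒟, ∀ k' ∈ 𝒟, k ≠ k' → Transverse k k')
    (h𝒟max : ¬∃ m ∈ ℌ.carrier, ∀ k ∈ 𝒟, Transverse m k)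
    (h : ℕ → Set V) (hmem : ∀ n, h n ∈ ℌ.carrier) (hdesc : ∀ n, h (n + 1) ⊂ h n) :
    ∃ k ∈ 𝒟, ∃ n : ℕ, h n ⊆ k ∨ h n ⊆ kᶜ := by
  have hanti : StrictAnti h := strictAnti_nat_of_succ_lt hdesc
  simpa only [Set.exists_range_iff] using
    chain_enters_maximal_transverse_family_general ℌ h𝒟mem h𝒟max
      (Set.infinite_range_of_injective hanti.injective) (Set.range_subset_iff.2 hmem) (hmem 0)
      (Set.forall_mem_range.2 fun n => hanti.antitone n.zero_le)
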